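/- Let 0<p<1 and let r_{n,k} be the root-cluster weights for random recursive trees (the case φ(δ)=1 for all δ). Then the bivariate exponential generating function R(x,u) = Σ_{n,k≥1} (r_{n,k}/n!) x^n u^k equals -(1/p)·log(1 - u + u(1-x)^p); equivalently, for all integers n,k ≥ 1, r_{n,k} equals n! times the coefficient of x^n u^k in the Taylor expansion of -(1/p)·log(1 - u + u(1-x)^p) at (x,u)=(0,0). -/

import Mathlib

open Finset Filter Asymptotics

/-- The root-cluster weight recursion. -/
noncomputable def clusterRec (p : ℝ) (φ : ℕ → ℝ) (r : ℕ → ℕ → ℝ) (b : ℕ → ℝ) : Prop :=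
  (∀ m, b m = ∑ k ∈ Finset.Icc 1 m, r m k) ∧
  ∀ n k : ℕ, 1 ≤ n → 1 ≤ k →
    r n k =
      ∑ δ ∈ Finset.range n, ∑ s ∈ (Finset.range (δ + 1)).attach,
        (δ.choose s.1 : ℝ) * (φ δ / (δ.factorial : ℝ)) *
          ∑ f ∈ (Finset.Nat.antidiagonalTuple δ (n - 1)).filter (fun f => ∀ i, 1 ≤ f i),
            (((n - 1).factorial : ℝ) / ∏ i, ((f i).factorial : ℝ)) *
              ∑ g ∈ (Finset.Nat.antidiagonalTuple s.1 (k - 1)).filter (fun g => ∀ i, 1 ≤ g i),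
                p ^ s.1 * (1 - p) ^ (δ - s.1) *
                  (∏ i : Fin s.1,
                    r (f (Fin.castLE (Nat.lt_succ_iff.mp (Finset.mem_range.mp s.2)) i)) (g i)) *
                  ∏ j ∈ Finset.univ.filter (fun j : Fin δ => s.1 ≤ (j : ℕ)), b (f j)

/-- Partial Bell polynomials. -/
noncomputable def bellPartial (k j : ℕ) (x : ℕ → ℝ) : ℝ :=
  ∑ m ∈ (Fintype.piFinset (fun _ : Fin (k - j + 1) => Finset.range (k + 1))).filter
      (fun m : Fin (k - j + 1) → ℕ => (∑ i : Fin (k - j + 1), ((i : ℕ) + 1) * m i) = k ∧ (∑ i, m i) = j),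
    (k.factorial : ℝ) *
      ∏ i : Fin (k - j + 1), x ((i : ℕ) + 1) ^ m i /
        (((m i).factorial : ℝ) * (((i : ℕ) + 1).factorial : ℝ) ^ m i)

/-!
Splitting a tree at the root turns the recursion into `∂ₓR = u Φ(p R + (1 - p) B)`, where
`B(x) = R(x, 1)` and `Φ(z) = ∑ φ(δ) zᵟ / δ!`; at `u = 1` it reads `B' = Φ(B)`. For `Φ = exp` this
gives `(1 - x) B' = 1`, so that `W(x) = 1 - (1 - x)ᵖ` satisfies `W' = p (1 - W) B'`. The equation
for `E = ∂ₓR / u` is of Riccati type and is solved by `p E = W' / (1 - u W)`. Expanding in powers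
of `u` yields `k p [uᵏ] R = Wᵏ`, which is the expansion of `-log (1 - u W)`.
-/

section FormalPowerSeries

open PowerSeries

/-- The compositions of `n` into `d` positive parts: the index set of both inner sums of
`clusterRec`. -/
def positiveTuples (d n : ℕ) : Finset (Fin d → ℕ) :=
  {f ∈ Finset.Nat.antidiagonalTuple d n | ∀ i, 1 ≤ f i}

/-- The exponential generating function `∑ aₙ Xⁿ / n!`. -/
noncomputable def expGenFun {A : Type*} [AddCommMonoid A] [Module ℝ A] (a : ℕ → A) : A⟦X⟧ :=
  .mk fun n => (n.factorial : ℝ)⁻¹ • a n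

/-- The coefficient of `u ^ k` of a series in `x` whose coefficients are polynomials in `u`,
as a series in `x`. -/
noncomputable def polyCoeff {A : Type*} [Semiring A] (k : ℕ) (F : (Polynomial A)⟦X⟧) : A⟦X⟧ :=
  .mk fun n => (coeff n F).coeff k

theorem coeff_expGenFun {A : Type*} [Semiring A] [Module ℝ A] (a : ℕ → A) (n : ℕ) :
    coeff n (expGenFun a) = (n.factorial : ℝ)⁻¹ • a n :=
  coeff_mk n _

theorem constantCoeff_expGenFun {A : Type*} [Semiring A] [Module ℝ A] (a : ℕ → A) :
    constantCoeff (expGenFun a) = a 0 := by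
  simp [← coeff_zero_eq_constantCoeff_apply, coeff_expGenFun]

theorem expGenFun_one (A : Type*) [Ring A] [Algebra ℝ A] [Algebra ℚ A] :
    expGenFun (fun _ => (1 : A)) = exp A := by
  ext n
  rw [coeff_expGenFun, coeff_exp, IsScalarTower.algebraMap_apply ℚ ℝ A, Algebra.smul_def, mul_one]
  simp

section Semiring

variable {A : Type*} [CommSemiring A]

theorem polyCoeff_add (k : ℕ) (F G : (Polynomial A)⟦X⟧) :
    polyCoeff k (F + G) = polyCoeff k F + polyCoeff k G := by
  ext n
  simp [polyCoeff]

theorem polyCoeff_map_C_mul (k : ℕ) (W : A⟦X⟧) (F : (Polynomial A)⟦X⟧) :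
    polyCoeff k (map Polynomial.C W * F) = W * polyCoeff k F := by
  ext n
  simp [polyCoeff, coeff_mul, Polynomial.finsetSum_coeff]

theorem polyCoeff_zero_map_C (W : A⟦X⟧) : polyCoeff 0 (map Polynomial.C W) = W := by
  ext n
  simp [polyCoeff]

theorem polyCoeff_succ_map_C (k : ℕ) (W : A⟦X⟧) :
    polyCoeff (k + 1) (map Polynomial.C W) = 0 := by
  ext n
  simp [polyCoeff]

theorem polyCoeff_zero_C_X_mul (F : (Polynomial A)⟦X⟧) :
    polyCoeff 0 (C Polynomial.X * F) = 0 := by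
  ext n
  simp [polyCoeff]

theorem polyCoeff_succ_C_X_mul (k : ℕ) (F : (Polynomial A)⟦X⟧) :
    polyCoeff (k + 1) (C Polynomial.X * F) = polyCoeff k F := by
  ext n
  simp [polyCoeff, Polynomial.coeff_X_mul]

theorem polyCoeff_derivative (k : ℕ) (F : (Polynomial A)⟦X⟧) :
    polyCoeff k (derivative (Polynomial A) F) = derivative A (polyCoeff k F) := by
  ext n
  simp only [polyCoeff, coeff_mk, coeff_derivative]
  rw [← Nat.cast_succ, ← Nat.cast_succ, Polynomial.coeff_mul_natCast]

theorem powerSeries_map_derivative {B : Type*} [CommSemiring B] (f : A →+* B) (F : A⟦X⟧) :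
    map f (derivative A F) = derivative B (map f F) := by
  ext n
  simp [coeff_derivative]

theorem powerSeries_coeff_prod_eq_sum_positiveTuples {d : ℕ} (F : Fin d → A⟦X⟧)
    (hF : ∀ i, constantCoeff (F i) = 0) (n : ℕ) :
    coeff n (∏ i, F i) = ∑ f ∈ positiveTuples d n, ∏ i, coeff (f i) (F i) := by
  classical
  have hpos (f : Fin d → ℕ) (hf : ∏ i, coeff (f i) (F i) ≠ 0) (i : Fin d) : 1 ≤ f i := by
    by_contra! h
    refine hf (Finset.prod_eq_zero (Finset.mem_univ i) ?_)
    rw [Nat.lt_one_iff.mp h, coeff_zero_eq_constantCoeff_apply, hF]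
  rw [positiveTuples, Finset.sum_filter_of_ne fun f _ => hpos f, coeff_prod]
  refine Finset.sum_nbij' (fun l => ⇑l) (fun f => Finsupp.equivFunOnFinite.symm f) ?_ ?_ ?_ ?_ ?_
  · intro l hl
    simpa [Finset.mem_finsuppAntidiag, Finset.Nat.mem_antidiagonalTuple] using hl
  · intro f hf
    simpa [Finset.mem_finsuppAntidiag, Finset.Nat.mem_antidiagonalTuple] using hf
  all_goals intros; first | rfl | ext; rfl

theorem polynomial_coeff_prod_eq_sum_positiveTuples {d : ℕ} (P : Fin d → Polynomial A)
    (hP : ∀ i, (P i).coeff 0 = 0) (k : ℕ) :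
    (∏ i, P i).coeff k = ∑ g ∈ positiveTuples d k, ∏ i, (P i).coeff (g i) := by
  rw [← Polynomial.coeff_coe, ← Polynomial.coeToPowerSeries.ringHom_apply, map_prod,
    powerSeries_coeff_prod_eq_sum_positiveTuples]
  · simp
  · simpa using hP

end Semiring

section Ring

variable {A : Type*} [CommRing A]

theorem coeff_subst_eq_sum_range {F : A⟦X⟧} (hF : constantCoeff F = 0) (Φ : A⟦X⟧) (n : ℕ) :
    coeff n (Φ.subst F) = ∑ d ∈ Finset.range (n + 1), coeff d Φ * coeff n (F ^ d) := by
  rw [coeff_subst' (.of_constantCoeff_zero' hF),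
    finsum_eq_sum_of_support_subset (s := Finset.range (n + 1))]
  · rfl
  · intro d hd
    by_contra hdn
    refine hd ?_
    have hdvd : (X : A⟦X⟧) ^ d ∣ F ^ d := pow_dvd_pow_of_dvd (X_dvd_iff.mpr hF) d
    have : n < d := by simpa using hdn
    simp [X_pow_dvd_iff.mp hdvd n this]

theorem eq_zero_of_derivative_eq_mul [IsAddTorsionFree A] {F H : A⟦X⟧}
    (h0 : constantCoeff F = 0) (hF : derivative A F = H * F) : F = 0 := by
  ext n
  induction n using Nat.strong_induction_on with
  | _ n ih =>
    cases n with
    | zero => simpa using h0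
    | succ n =>
      have hn := congrArg (coeff n) hF
      have hsum : coeff n (H * F) = 0 := by
        rw [coeff_mul]
        refine Finset.sum_eq_zero fun x hx => ?_
        have hx : x.1 + x.2 = n := by simpa using hx
        rw [ih x.2 (by omega), map_zero, mul_zero]
      rw [coeff_derivative, hsum, ← Nat.cast_succ, mul_comm, ← nsmul_eq_mul] at hn
      simpa only [map_zero, nsmul_eq_zero_iff, Nat.succ_ne_zero, false_or, or_false] using hn

theorem succ_mul_polyCoeff_succ [IsAddTorsionFree A] {p : A} {R : (Polynomial A)⟦X⟧} {W : A⟦X⟧}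
    (hR0 : constantCoeff R = 0) (hW0 : constantCoeff W = 0)
    (h : (1 - C Polynomial.X * map Polynomial.C W) *
        (C (Polynomial.C p) * derivative (Polynomial A) R) =
      C Polynomial.X * derivative (Polynomial A) (map Polynomial.C W)) (k : ℕ) :
    ((k + 1 : ℕ) : A⟦X⟧) * (C p * polyCoeff (k + 1) R) = W ^ (k + 1) := by
  set G := C (Polynomial.C p) * derivative (Polynomial A) R with hG
  have hrec : G =
      C Polynomial.X * (map Polynomial.C (derivative A W) + map Polynomial.C W * G) := by
    rw [powerSeries_map_derivative]
    linear_combination h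
  have hGk : polyCoeff (k + 1) G = W ^ k * derivative A W := by
    induction k with
    | zero =>
      rw [hrec, polyCoeff_succ_C_X_mul, polyCoeff_add, polyCoeff_map_C_mul,
        polyCoeff_zero_map_C, hrec, polyCoeff_zero_C_X_mul]
      ring
    | succ k ih =>
      rw [hrec, polyCoeff_succ_C_X_mul, polyCoeff_add, polyCoeff_map_C_mul,
        polyCoeff_succ_map_C, ih]
      ring
  have hGR : polyCoeff (k + 1) G = C p * derivative A (polyCoeff (k + 1) R) := by
    rw [hG, ← map_C, polyCoeff_map_C_mul, polyCoeff_derivative]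
  refine derivative.ext ?_ ?_
  · rw [hGR] at hGk
    rw [derivative_pow, Nat.add_sub_cancel, mul_assoc, ← hGk]
    simp
  · have : constantCoeff (polyCoeff (k + 1) R) = 0 := by
      rw [← coeff_zero_eq_constantCoeff_apply, polyCoeff, coeff_mk,
        coeff_zero_eq_constantCoeff_apply, hR0, Polynomial.coeff_zero]
    simp [this, hW0]

variable [Algebra ℚ A]

theorem derivative_exp_subst {F : A⟦X⟧} (hF : constantCoeff F = 0) :
    derivative A ((exp A).subst F) = (exp A).subst F * derivative A F := by
  rw [derivative_subst (.of_constantCoeff_zero' hF), derivative_exp]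

theorem constantCoeff_exp_subst {F : A⟦X⟧} (hF : constantCoeff F = 0) :
    constantCoeff ((exp A).subst F) = 1 := by
  rw [← coeff_zero_eq_constantCoeff_apply, coeff_subst_eq_sum_range hF]
  simp

theorem derivative_derivative_eq_mul_self {B : A⟦X⟧} (hB0 : constantCoeff B = 0)
    (hB : derivative A B = (exp A).subst B) :
    derivative A (derivative A B) = derivative A B * derivative A B := by
  conv_lhs => rw [hB, derivative_exp_subst hB0, ← hB]

variable [IsAddTorsionFree A]

theorem one_sub_X_mul_derivative_eq_one {B : A⟦X⟧} (hB0 : constantCoeff B = 0)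
    (hB : derivative A B = (exp A).subst B) : (1 - X) * derivative A B = 1 := by
  rw [← sub_eq_zero]
  refine eq_zero_of_derivative_eq_mul (H := derivative A B) ?_ ?_
  · simp [hB, constantCoeff_exp_subst hB0]
  · simp only [map_sub, Derivation.leibniz, derivative_derivative_eq_mul_self hB0 hB,
      derivative_X, derivative_one, smul_eq_mul]
    ring

theorem one_sub_mul_derivative_eq {p u : A} {R B W : A⟦X⟧}
    (hR0 : constantCoeff R = 0) (hB0 : constantCoeff B = 0) (hW0 : constantCoeff W = 0)
    (hB : derivative A B = (exp A).subst B)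
    (hW : derivative A W = C p * (1 - W) * derivative A B)
    (hR : derivative A R = C u * (exp A).subst (C p * R + C (1 - p) * B)) :
    (1 - C u * W) * (C p * derivative A R) = C u * derivative A W := by
  set E := (exp A).subst (C p * R + C (1 - p) * B) with hE
  have hF0 : constantCoeff (C p * R + C (1 - p) * B) = 0 := by simp [hR0, hB0]
  have hE' : derivative A E = E * (C p * (C u * E) + C (1 - p) * derivative A B) := by
    rw [hE, derivative_exp_subst hF0, ← hE]
    simp [hR, Derivation.leibniz]
  -- Both terms of the difference solve the linear equation `Z' = (p u E + (1 - p) B') Z`.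
  have hZ : (1 - C u * W) * (C p * E) - derivative A W = 0 := by
    refine eq_zero_of_derivative_eq_mul
      (H := C p * (C u * E) + C (1 - p) * derivative A B) ?_ ?_
    · have hE0 : constantCoeff E = 1 := constantCoeff_exp_subst hF0
      have hB1 : constantCoeff (derivative A B) = 1 := by rw [hB, constantCoeff_exp_subst hB0]
      simp [hW, hW0, hE0, hB1]
    · rw [hW]
      simp only [map_sub, map_one, Derivation.leibniz, hE', hW, derivative_C, derivative_one,
        derivative_derivative_eq_mul_self hB0 hB, smul_eq_mul]
      ring
  rw [hR]
  linear_combination C u * hZ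

end Ring

end FormalPowerSeries

section Recursion

open PowerSeries

/-- The root-cluster polynomial `∑ₖ r n k uᵏ` of trees with `n` vertices. -/
noncomputable def clusterPoly (r : ℕ → ℕ → ℝ) (n : ℕ) : Polynomial ℝ :=
  ∑ k ∈ Finset.Icc 1 n, Polynomial.monomial k (r n k)

/-- The total weight of the ways to attach `s` subtrees inside and `t` subtrees outside the root
cluster, with `n` vertices in all of which `k` are in the root cluster. -/
noncomputable def subtreeWeight (r : ℕ → ℕ → ℝ) (b : ℕ → ℝ) (s t n k : ℕ) : ℝ :=
  ∑ f ∈ positiveTuples (s + t) n, ∑ g ∈ positiveTuples s k,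
    (n.factorial : ℝ) / (∏ i, ((f i).factorial : ℝ)) *
      ((∏ i, r (f (Fin.castAdd t i)) (g i)) * ∏ j, b (f (Fin.natAdd s j)))

/-- The generating function `p R(x, u) + (1 - p) B(x)` of the subtree of a child of the root,
where `u` marks the vertices in the root cluster. -/
noncomputable def childGenFun (p : ℝ) (r : ℕ → ℕ → ℝ) (b : ℕ → ℝ) : (Polynomial ℝ)⟦X⟧ :=
  C (Polynomial.C p) * expGenFun (clusterPoly r) +
    C (Polynomial.C (1 - p)) * map Polynomial.C (expGenFun b)

theorem clusterPoly_zero (r : ℕ → ℕ → ℝ) : clusterPoly r 0 = 0 := by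
  simp [clusterPoly]

theorem constantCoeff_expGenFun_clusterPoly (r : ℕ → ℕ → ℝ) :
    constantCoeff (expGenFun (clusterPoly r)) = 0 := by
  rw [constantCoeff_expGenFun, clusterPoly_zero]

theorem coeff_clusterPoly (r : ℕ → ℕ → ℝ) (n k : ℕ) :
    (clusterPoly r n).coeff k = if k ∈ Finset.Icc 1 n then r n k else 0 := by
  simp [clusterPoly, Polynomial.finsetSum_coeff, Polynomial.coeff_monomial]

theorem coeff_zero_clusterPoly (r : ℕ → ℕ → ℝ) (n : ℕ) : (clusterPoly r n).coeff 0 = 0 := by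
  simp [coeff_clusterPoly]

variable {p : ℝ} {φ : ℕ → ℝ} {r : ℕ → ℕ → ℝ} {b : ℕ → ℝ}

theorem clusterRec.apply_zero (h : clusterRec p φ r b) : b 0 = 0 := by
  simp [h.1]

theorem clusterRec.constantCoeff_map_expGenFun (h : clusterRec p φ r b) :
    constantCoeff (map Polynomial.C (expGenFun b)) = 0 := by
  rw [← coeff_zero_eq_constantCoeff_apply, coeff_map, coeff_zero_eq_constantCoeff_apply,
    constantCoeff_expGenFun, h.apply_zero, map_zero]

theorem clusterRec.constantCoeff_childGenFun (h : clusterRec p φ r b) :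
    constantCoeff (childGenFun p r b) = 0 := by
  rw [childGenFun, map_add, map_mul, map_mul, h.constantCoeff_map_expGenFun,
    constantCoeff_expGenFun_clusterPoly, mul_zero, mul_zero, add_zero]

theorem clusterRec.eval_one_clusterPoly (h : clusterRec p φ r b) (n : ℕ) :
    (clusterPoly r n).eval 1 = b n := by
  simp [clusterPoly, Polynomial.eval_finsetSum, h.1]

theorem clusterRec.map_eval_one_clusterPoly (h : clusterRec p φ r b) :
    PowerSeries.map (Polynomial.evalRingHom 1) (expGenFun (clusterPoly r)) = expGenFun b := by
  ext n
  simp [coeff_expGenFun, h.eval_one_clusterPoly]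

theorem clusterRec.map_eval_one_childGenFun (h : clusterRec p φ r b) :
    PowerSeries.map (Polynomial.evalRingHom 1) (childGenFun p r b) = expGenFun b := by
  have hB : PowerSeries.map (Polynomial.evalRingHom 1) (map Polynomial.C (expGenFun b)) =
      expGenFun b := by
    ext n
    simp
  rw [childGenFun, map_add, map_mul, map_mul, h.map_eval_one_clusterPoly, hB, map_C, map_C,
    Polynomial.coe_evalRingHom, Polynomial.eval_C, Polynomial.eval_C, ← add_mul, ← map_add,
    add_sub_cancel, map_one, one_mul]

theorem clusterRec.apply_succ_succ (h : clusterRec p φ r b) (n k : ℕ) :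
    r (n + 1) (k + 1) = ∑ δ ∈ Finset.range (n + 1), φ δ / (δ.factorial : ℝ) *
      ∑ x ∈ antidiagonal δ,
        (δ.choose x.1 : ℝ) * (p ^ x.1 * (1 - p) ^ x.2) * subtreeWeight r b x.1 x.2 n k := by
  rw [h.2 (n + 1) (k + 1) n.succ_pos k.succ_pos]
  refine Finset.sum_congr rfl fun δ _ => ?_
  rw [Finset.Nat.sum_antidiagonal_eq_sum_range_succ_mk, Finset.mul_sum,
    ← Finset.sum_attach (Finset.range _)]
  refine Finset.sum_congr rfl fun s _ => ?_
  obtain ⟨s, hs⟩ := s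
  obtain ⟨t, rfl⟩ := Nat.exists_eq_add_of_le (Finset.mem_range_succ_iff.mp hs)
  simp only [Nat.add_sub_cancel, Nat.add_sub_cancel_left]
  simp only [subtreeWeight, Finset.mul_sum]
  refine Finset.sum_congr rfl fun f _ => Finset.sum_congr rfl fun g _ => ?_
  have hb : ∏ j with s ≤ ((j : Fin (s + t)) : ℕ), b (f j) = ∏ j, b (f (Fin.natAdd s j)) := by
    simp [Finset.prod_filter, Fin.prod_univ_add, fun i : Fin s => not_le.mpr i.isLt]
  rw [hb]
  simp only [Fin.castAdd]
  ring

theorem subtreeWeight_eq_zero_of_lt {n : ℕ}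
    (hr : ∀ m ≤ n, 1 ≤ m → ∀ j, m < j → r m j = 0) (s t : ℕ) {k : ℕ} (hk : n < k) :
    subtreeWeight r b s t n k = 0 := by
  refine Finset.sum_eq_zero fun f hf => Finset.sum_eq_zero fun g hg => ?_
  simp only [positiveTuples, Finset.mem_filter, Finset.Nat.mem_antidiagonalTuple] at hf hg
  have hle : ∑ i, f (Fin.castAdd t i) ≤ n := by
    rw [← hf.1, Fin.sum_univ_add]
    exact Nat.le_add_right _ _
  obtain ⟨i, -, hi⟩ := Finset.exists_lt_of_sum_lt ((hle.trans_lt hk).trans_eq hg.1.symm)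
  have hfi : f (Fin.castAdd t i) ≤ n :=
    (Finset.single_le_sum (f := fun i => f (Fin.castAdd t i)) (fun _ _ => Nat.zero_le _)
      (Finset.mem_univ i)).trans hle
  rw [Finset.prod_eq_zero (Finset.mem_univ i) (hr _ hfi (hf.2 _) _ hi), zero_mul, mul_zero]

theorem clusterRec.eq_zero_of_lt (h : clusterRec p φ r b) {n : ℕ} (hn : 1 ≤ n) {k : ℕ}
    (hk : n < k) : r n k = 0 := by
  induction n using Nat.strong_induction_on generalizing k with
  | _ n ih =>
    obtain ⟨n, rfl⟩ := Nat.exists_eq_add_of_le' hn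
    obtain ⟨k, rfl⟩ := Nat.exists_eq_add_of_le' (hn.trans hk.le)
    rw [h.apply_succ_succ]
    refine Finset.sum_eq_zero fun δ _ => ?_
    rw [Finset.sum_eq_zero fun x _ => ?_, mul_zero]
    rw [subtreeWeight_eq_zero_of_lt (fun m hm hm1 j hj => ih m (by omega) hm1 hj) _ _
      (by omega), mul_zero]

theorem clusterRec.coeff_clusterPoly (h : clusterRec p φ r b) {n k : ℕ} (hn : 1 ≤ n)
    (hk : 1 ≤ k) : (clusterPoly r n).coeff k = r n k := by
  rw [_root_.coeff_clusterPoly, ite_eq_left_iff]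
  intro hkn
  rw [h.eq_zero_of_lt hn (by simpa [hk] using hkn)]

theorem clusterRec.subtreeWeight_eq (h : clusterRec p φ r b) (s t n k : ℕ) :
    subtreeWeight r b s t n k = (n.factorial : ℝ) *
      (coeff n (expGenFun (clusterPoly r) ^ s *
        map Polynomial.C (expGenFun b) ^ t)).coeff k := by
  set R := expGenFun (clusterPoly r) with hR
  set B := map Polynomial.C (expGenFun b) with hB
  have hR0 : constantCoeff R = 0 := constantCoeff_expGenFun_clusterPoly r
  have hB0 : constantCoeff B = 0 := h.constantCoeff_map_expGenFun
  have hprod : R ^ s * B ^ t =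
      ∏ i, Fin.append (fun _ : Fin s => R) (fun _ : Fin t => B) i := by
    simp [Fin.prod_univ_add]
  rw [hprod, powerSeries_coeff_prod_eq_sum_positiveTuples, Polynomial.finsetSum_coeff,
    subtreeWeight, Finset.mul_sum]
  · refine Finset.sum_congr rfl fun f hf => ?_
    have hcoeff : ∏ i, coeff (f i) (Fin.append (fun _ : Fin s => R) (fun _ : Fin t => B) i) =
        Polynomial.C ((∏ i, ((f i).factorial : ℝ))⁻¹ * ∏ j, b (f (Fin.natAdd s j))) *
          ∏ i, clusterPoly r (f (Fin.castAdd t i)) := by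
      simp only [hR, hB, Fin.prod_univ_add, Fin.append_left, Fin.append_right, coeff_expGenFun,
        coeff_map, Polynomial.smul_eq_C_mul, smul_eq_mul, map_mul, map_prod, mul_inv_rev,
        Finset.prod_mul_distrib, ← Finset.prod_inv_distrib]
      ring
    rw [hcoeff, Polynomial.coeff_C_mul,
      polynomial_coeff_prod_eq_sum_positiveTuples _ fun i => coeff_zero_clusterPoly r _,
      Finset.mul_sum, Finset.mul_sum]
    refine Finset.sum_congr rfl fun g hg => ?_
    have hfpos := (Finset.mem_filter.mp hf).2
    have hgpos := (Finset.mem_filter.mp hg).2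
    simp only [h.coeff_clusterPoly (hfpos _) (hgpos _)]
    ring
  · refine Fin.addCases ?_ ?_ <;> simp [hR0, hB0]

theorem clusterRec.factorial_mul_coeff_childGenFun_pow (h : clusterRec p φ r b) (δ n k : ℕ) :
    (n.factorial : ℝ) * (coeff n (childGenFun p r b ^ δ)).coeff k =
      ∑ x ∈ antidiagonal δ,
        (δ.choose x.1 : ℝ) * (p ^ x.1 * (1 - p) ^ x.2) * subtreeWeight r b x.1 x.2 n k := by
  rw [childGenFun, (Commute.all _ _).add_pow', map_sum, Polynomial.finsetSum_coeff, Finset.mul_sum]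
  refine Finset.sum_congr rfl fun x _ => ?_
  rw [mul_pow, mul_pow, ← map_pow, ← map_pow, ← map_pow, ← map_pow, mul_mul_mul_comm, ← map_mul,
    ← map_mul, h.subtreeWeight_eq, map_nsmul, coeff_C_mul, Polynomial.coeff_smul,
    Polynomial.coeff_C_mul, nsmul_eq_mul]
  ring

theorem clusterRec.derivative_expGenFun_clusterPoly (h : clusterRec p φ r b) :
    derivative (Polynomial ℝ) (expGenFun (clusterPoly r)) =
      C Polynomial.X * (expGenFun fun d => Polynomial.C (φ d)).subst (childGenFun p r b) := by
  ext n k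
  rw [coeff_C_mul, coeff_derivative, ← Nat.cast_succ, Polynomial.coeff_mul_natCast,
    coeff_expGenFun, Polynomial.coeff_smul]
  cases k with
  | zero => simp [coeff_zero_clusterPoly]
  | succ k =>
    rw [Polynomial.coeff_X_mul, h.coeff_clusterPoly n.succ_pos k.succ_pos,
      coeff_subst_eq_sum_range h.constantCoeff_childGenFun, Polynomial.finsetSum_coeff,
      h.apply_succ_succ, smul_eq_mul, Finset.mul_sum, Finset.sum_mul]
    refine Finset.sum_congr rfl fun δ _ => ?_
    rw [← h.factorial_mul_coeff_childGenFun_pow, coeff_expGenFun, smul_mul_assoc,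
      Polynomial.coeff_smul, Polynomial.coeff_C_mul, smul_eq_mul, Nat.factorial_succ]
    push_cast
    field_simp

theorem clusterRec.derivative_expGenFun (h : clusterRec p φ r b) :
    derivative ℝ (expGenFun b) = (expGenFun φ).subst (expGenFun b) := by
  have hΦ : PowerSeries.map (Polynomial.evalRingHom 1) (expGenFun fun d => Polynomial.C (φ d)) =
      expGenFun φ := by
    ext n
    simp [coeff_expGenFun]
  have hsubst : PowerSeries.map (Polynomial.evalRingHom 1)
      ((expGenFun fun d => Polynomial.C (φ d)).subst (childGenFun p r b)) =
        (expGenFun φ).subst (expGenFun b) := by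
    rw [← hΦ, ← h.map_eval_one_childGenFun]
    exact map_subst (HasSubst.of_constantCoeff_zero' h.constantCoeff_childGenFun) _
  have hderiv := congrArg (PowerSeries.map (Polynomial.evalRingHom 1))
    h.derivative_expGenFun_clusterPoly
  rwa [powerSeries_map_derivative, h.map_eval_one_clusterPoly, map_mul, map_C, hsubst,
    Polynomial.coe_evalRingHom, Polynomial.eval_X, map_one, one_mul] at hderiv

theorem clusterRec.one_sub_mul_derivative_expGenFun_clusterPoly
    (h : clusterRec p (fun _ => 1) r b) {W : ℝ⟦X⟧} (hW0 : constantCoeff W = 0)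
    (hW : (1 - X) * derivative ℝ W = C p * (1 - W)) :
    (1 - C Polynomial.X * map Polynomial.C W) *
        (C (Polynomial.C p) * derivative (Polynomial ℝ) (expGenFun (clusterPoly r))) =
      C Polynomial.X * derivative (Polynomial ℝ) (map Polynomial.C W) := by
  have hB : derivative ℝ (expGenFun b) = (exp ℝ).subst (expGenFun b) := by
    rw [h.derivative_expGenFun, expGenFun_one]
  have hB0 : constantCoeff (expGenFun b) = 0 := by rw [constantCoeff_expGenFun, h.apply_zero]
  have hWB : derivative ℝ W = C p * (1 - W) * derivative ℝ (expGenFun b) := by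
    linear_combination derivative ℝ (expGenFun b) * hW -
      derivative ℝ W * one_sub_X_mul_derivative_eq_one hB0 hB
  have hsubst : map Polynomial.C ((exp ℝ).subst (expGenFun b)) =
      (exp (Polynomial ℝ)).subst (map Polynomial.C (expGenFun b)) := by
    rw [← map_exp Polynomial.C]
    exact map_subst (HasSubst.of_constantCoeff_zero' hB0) _
  refine one_sub_mul_derivative_eq (B := map Polynomial.C (expGenFun b))
    (constantCoeff_expGenFun_clusterPoly r) h.constantCoeff_map_expGenFun ?_ ?_ ?_ ?_
  · rw [← coeff_zero_eq_constantCoeff_apply, coeff_map, coeff_zero_eq_constantCoeff_apply, hW0,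
      map_zero]
  · rw [← powerSeries_map_derivative, hB, hsubst]
  · rw [← powerSeries_map_derivative, hWB, ← powerSeries_map_derivative]
    simp
  · rw [h.derivative_expGenFun_clusterPoly, ← expGenFun_one]
    simp [childGenFun]

theorem clusterRec.mul_apply_eq_factorial_mul_coeff_pow (h : clusterRec p (fun _ => 1) r b)
    {W : ℝ⟦X⟧} (hW0 : constantCoeff W = 0)
    (hW : (1 - X) * derivative ℝ W = C p * (1 - W)) {n k : ℕ} (hn : 1 ≤ n) (hk : 1 ≤ k) :
    k * (p * r n k) = n.factorial * coeff n (W ^ k) := by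
  obtain ⟨k, rfl⟩ := Nat.exists_eq_add_of_le' hk
  have hcoeff := succ_mul_polyCoeff_succ (constantCoeff_expGenFun_clusterPoly r) hW0
    (h.one_sub_mul_derivative_expGenFun_clusterPoly hW0 hW) k
  rw [← hcoeff, ← nsmul_eq_mul _ (C p * _), map_nsmul, coeff_C_mul, polyCoeff, coeff_mk,
    coeff_expGenFun, Polynomial.coeff_smul, h.coeff_clusterPoly hn hk, nsmul_eq_mul, smul_eq_mul]
  field_simp

end Recursion

section Taylor

open PowerSeries

/-- The Taylor series of `f` at `x₀`, as a formal power series. -/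
noncomputable def taylorSeries (f : ℝ → ℝ) (x₀ : ℝ) : ℝ⟦X⟧ :=
  expGenFun fun n => iteratedDeriv n f x₀

variable {f g : ℝ → ℝ} {x₀ : ℝ}

theorem factorial_mul_coeff_taylorSeries (f : ℝ → ℝ) (x₀ : ℝ) (n : ℕ) :
    n.factorial * coeff n (taylorSeries f x₀) = iteratedDeriv n f x₀ := by
  rw [taylorSeries, coeff_expGenFun, smul_eq_mul]
  field_simp

theorem taylorSeries_one (x₀ : ℝ) : taylorSeries 1 x₀ = 1 := by
  ext n
  rw [taylorSeries, coeff_expGenFun, coeff_one, Pi.one_def, iteratedDeriv_const]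
  split_ifs with h <;> simp [h]

theorem taylorSeries_mul (hf : ∀ n : ℕ, ContDiffAt ℝ n f x₀) (hg : ∀ n : ℕ, ContDiffAt ℝ n g x₀) :
    taylorSeries (f * g) x₀ = taylorSeries f x₀ * taylorSeries g x₀ := by
  ext n
  rw [coeff_mul, Finset.Nat.sum_antidiagonal_eq_sum_range_succ_mk]
  simp only [taylorSeries, coeff_expGenFun, smul_eq_mul]
  rw [iteratedDeriv_mul (hf n) (hg n), Finset.mul_sum]
  refine Finset.sum_congr rfl fun i hi => ?_
  rw [Nat.cast_choose ℝ (Finset.mem_range_succ_iff.mp hi)]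
  field_simp

theorem taylorSeries_pow (hf : ∀ n : ℕ, ContDiffAt ℝ n f x₀) (k : ℕ) :
    taylorSeries (f ^ k) x₀ = taylorSeries f x₀ ^ k := by
  induction k with
  | zero => rw [pow_zero, pow_zero, taylorSeries_one]
  | succ k ih =>
    rw [pow_succ, taylorSeries_mul (f := f ^ k) (fun n => (hf n).pow k) hf, ih, pow_succ]

theorem taylorSeries_sub (hf : ∀ n : ℕ, ContDiffAt ℝ n f x₀) (hg : ∀ n : ℕ, ContDiffAt ℝ n g x₀) :
    taylorSeries (f - g) x₀ = taylorSeries f x₀ - taylorSeries g x₀ := by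
  ext n
  simp only [taylorSeries, coeff_expGenFun, map_sub, iteratedDeriv_sub (hf n) (hg n), smul_sub]

theorem iteratedDeriv_one_sub_rpow_zero (p : ℝ) (n : ℕ) :
    iteratedDeriv n (fun x : ℝ => (1 - x) ^ p) 0 =
      (-1) ^ n * (descPochhammer ℝ n).eval p := by
  rw [iteratedDeriv_comp_const_sub n (fun x : ℝ => x ^ p) 1, iteratedDeriv_eq_iterate]
  simp [Real.iter_deriv_rpow_const]

theorem one_sub_X_mul_derivative_taylorSeries_one_sub_rpow (p : ℝ) :
    (1 - X) * derivative ℝ (taylorSeries (fun x : ℝ => (1 - x) ^ p) 0) =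
      -(C p * taylorSeries (fun x : ℝ => (1 - x) ^ p) 0) := by
  have hcoeff (n : ℕ) : coeff n (derivative ℝ (taylorSeries (fun x : ℝ => (1 - x) ^ p) 0)) =
      (n - p) * coeff n (taylorSeries (fun x : ℝ => (1 - x) ^ p) 0) := by
    simp only [coeff_derivative, taylorSeries, coeff_expGenFun, iteratedDeriv_one_sub_rpow_zero,
      descPochhammer_succ_right, Polynomial.eval_mul, Polynomial.eval_sub, Polynomial.eval_X,
      Polynomial.eval_natCast, Nat.factorial_succ, smul_eq_mul]
    push_cast
    field_simp
    ring
  ext n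
  rw [sub_mul, one_mul, map_sub, map_neg, coeff_C_mul, hcoeff]
  cases n with
  | zero => simp
  | succ n =>
    rw [coeff_succ_X_mul, coeff_derivative]
    push_cast
    ring

theorem iteratedDeriv_succ_log_one_sub_mul_zero (c : ℝ) (k : ℕ) :
    iteratedDeriv (k + 1) (fun u : ℝ => Real.log (1 - c * u)) 0 =
      -((k.factorial : ℝ) * c ^ (k + 1)) := by
  have hderiv : deriv (fun u : ℝ => Real.log (1 - c * u)) =ᶠ[nhds 0]
      fun u => -c * (-c * u + 1)⁻¹ := by
    have hne : ∀ᶠ u : ℝ in nhds 0, 1 - c * u ≠ 0 :=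
      ContinuousAt.eventually_ne (by fun_prop) (by simp)
    filter_upwards [hne] with u hu
    have hlin : HasDerivAt (fun u : ℝ => 1 - c * u) (-c) u := by
      simpa using ((hasDerivAt_id u).const_mul c).const_sub 1
    rw [(hlin.log hu).deriv, div_eq_mul_inv]
    ring_nf
  rw [iteratedDeriv_succ', hderiv.iteratedDeriv_eq, iteratedDeriv_const_mul_field,
    iteratedDeriv_eq_iterate, iter_deriv_inv_linear]
  have hsign : ((-1 : ℝ) ^ k) * (-1) ^ k = 1 := by rw [← mul_pow]; simp
  simp only [neg_pow c, mul_zero, zero_add, one_zpow, mul_one, neg_mul]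
  linear_combination (-(c * k.factorial * c ^ k)) * hsign

end Taylor

theorem clusterRec.mul_apply_eq_iteratedDeriv {p : ℝ} {r : ℕ → ℕ → ℝ} {b : ℕ → ℝ}
    (h : clusterRec p (fun _ => 1) r b) {n k : ℕ} (hn : 1 ≤ n) (hk : 1 ≤ k) :
    k * (p * r n k) = iteratedDeriv n (fun x : ℝ => (1 - (1 - x) ^ p) ^ k) 0 := by
  let f : ℝ → ℝ := fun x => (1 - x) ^ p
  have h1smooth (m : ℕ) : ContDiffAt ℝ m (1 : ℝ → ℝ) 0 := contDiffAt_const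
  have hfsmooth (m : ℕ) : ContDiffAt ℝ m f 0 :=
    (contDiffAt_const.sub contDiffAt_id).rpow_const_of_ne (by simp)
  have hW : taylorSeries (1 - f) 0 = 1 - taylorSeries f 0 := by
    rw [taylorSeries_sub h1smooth hfsmooth, taylorSeries_one]
  have hpow : taylorSeries (fun x : ℝ => (1 - (1 - x) ^ p) ^ k) 0 = taylorSeries (1 - f) 0 ^ k :=
    taylorSeries_pow (fun m => (h1smooth m).sub (hfsmooth m)) k
  rw [← factorial_mul_coeff_taylorSeries, hpow]
  refine h.mul_apply_eq_factorial_mul_coeff_pow ?_ ?_ hn hk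
  · simp [taylorSeries, constantCoeff_expGenFun, f]
  · rw [hW, map_sub, PowerSeries.derivative_one, zero_sub, mul_neg,
      one_sub_X_mul_derivative_taylorSeries_one_sub_rpow, neg_neg, sub_sub_cancel]

theorem iteratedDeriv_succ_neg_inv_mul_log_zero (p y : ℝ) (k : ℕ) :
    iteratedDeriv (k + 1) (fun u : ℝ => -(1 / p) * Real.log (1 - u + u * y)) 0 =
      k.factorial / p * (1 - y) ^ (k + 1) := by
  have harg (u : ℝ) : 1 - u + u * y = 1 - (1 - y) * u := by ring
  simp only [harg]
  rw [iteratedDeriv_const_mul_field, iteratedDeriv_succ_log_one_sub_mul_zero]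
  ring

theorem stmt0_general (p : ℝ) (hp : p ≠ 0)
    (r : ℕ → ℕ → ℝ) (b : ℕ → ℝ)
    (hrec : clusterRec p (fun _ => 1) r b) :
    ∀ n k : ℕ, 1 ≤ n → 1 ≤ k →
      r n k = (n.factorial : ℝ) *
        ((1 / ((n.factorial : ℝ) * (k.factorial : ℝ))) *
          iteratedDeriv n
            (fun x : ℝ => iteratedDeriv k
              (fun u : ℝ => -(1 / p) * Real.log (1 - u + u * (1 - x) ^ p)) 0) 0) := by
  intro n k hn hk
  obtain ⟨k, rfl⟩ := Nat.exists_eq_add_of_le' hk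
  have hr := hrec.mul_apply_eq_iteratedDeriv hn hk
  simp only [iteratedDeriv_succ_neg_inv_mul_log_zero]
  rw [iteratedDeriv_const_mul_field, ← hr, Nat.factorial_succ]
  push_cast
  field_simp

/-- for random recursive trees (`φ(δ) = 1`), the root-cluster weights
`r n k` are `n!` times the Taylor coefficients of `-(1/p) log(1 - u + u (1-x)^p)`
at the origin. -/
theorem stmt0 (p : ℝ) (hp0 : 0 < p) (hp1 : p < 1)
    (r : ℕ → ℕ → ℝ) (b : ℕ → ℝ)
    (hrec : clusterRec p (fun _ => 1) r b) :
    ∀ n k : ℕ, 1 ≤ n → 1 ≤ k →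
      r n k = (n.factorial : ℝ) *
        ((1 / ((n.factorial : ℝ) * (k.factorial : ℝ))) *
          iteratedDeriv n
            (fun x : ℝ => iteratedDeriv k
              (fun u : ℝ => -(1 / p) * Real.log (1 - u + u * (1 - x) ^ p)) 0) 0) :=
  stmt0_general p hp0.ne' r b hrec
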